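/- arXiv:2311.17115 — 3 statements merged into one kernel-verified Lean document; each statement's English description precedes it below -/
import Mathlib

section
/- For every constant Φ ∈ (0, 1/10] there exist a positive integer c, a constant ε > 0, and a threshold n₀ such that for all integers n ≥ n₀ and all integers s with 1 ≤ s ≤ n/2, the following inequality holds: C(n, s) · C(c·s, ⌈(1−Φ)·c·s⌉) · ((1+ε)·s/n)^{(1−Φ)·c·s} ≤ 1/n², where C(·,·) denotes the binomial coefficient, ⌈·⌉ denotes the ceiling (so that the second binomial coefficient has an integer lower argument), and the last factor is a real power with real exponent (1−Φ)·c·s. -/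
lemma gen_bound (m j : ℕ) (t : ℝ) (ht : 0 ≤ t) : (m.choose j : ℝ) * t ^ j ≤ (1 + t) ^ m := by
  rcases lt_or_ge m j with h | h
  · rw [Nat.choose_eq_zero_of_lt h]
    simp only [Nat.cast_zero, zero_mul]
    positivity
  · rw [add_comm, add_pow]
    have := Finset.single_le_sum (f := fun i => t ^ i * 1 ^ (m - i) * (m.choose i : ℝ))
      (s := Finset.range (m + 1)) (fun i _ => by positivity) (Finset.mem_range.2 (by omega : j < m + 1))
    simp only [one_pow, mul_one] at this ⊢
    linarith

lemma choose_first (n s : ℕ) (hs : 1 ≤ s) (hn : 2 * s ≤ n) :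
    (n.choose s : ℝ) ≤ (4 / ((s : ℝ) / n)) ^ s := by
  have hs0 : (0 : ℝ) < s := by exact_mod_cast hs
  have hn0 : (0 : ℝ) < n := by exact_mod_cast (by omega : 0 < n)
  have hx : (0 : ℝ) < (s : ℝ) / n := by positivity
  have h1 := gen_bound n s ((s : ℝ) / n) hx.le
  have h2 : (1 + (s : ℝ) / n) ^ n ≤ 4 ^ s := by
    calc (1 + (s : ℝ) / n) ^ n ≤ (Real.exp ((s : ℝ) / n)) ^ n := by
          gcongr
          linarith [Real.add_one_le_exp ((s : ℝ) / n)]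
      _ = (Real.exp 1) ^ s := by
          rw [← Real.exp_nat_mul, ← Real.exp_nat_mul]
          congr 1
          field_simp
      _ ≤ 4 ^ s := by
          gcongr
          linarith [Real.exp_one_lt_d9]
  rw [div_pow, le_div_iff₀ (by positivity)]
  linarith

lemma choose_second (s k : ℕ) (hk : 27 * s ≤ k) (hk2 : k ≤ 30 * s) :
    ((30 * s).choose k : ℝ) ≤ (8 ^ 3 * (9 / 8) ^ 30) ^ s := by
  have h1 := gen_bound (30 * s) (30 * s - k) (1 / 8) (by norm_num)
  rw [Nat.choose_symm hk2, one_div, inv_pow, ← div_eq_mul_inv, div_le_iff₀ (by positivity)] at h1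
  refine h1.trans ?_
  rw [mul_pow, ← pow_mul, ← pow_mul, mul_comm]
  have h3 : (8 : ℝ) ^ (30 * s - k) ≤ 8 ^ (3 * s) :=
    pow_le_pow_right₀ (by norm_num) (by omega)
  have : (1 + 8⁻¹ : ℝ) = 9 / 8 := by norm_num
  rw [this]
  gcongr

lemma final_bound (n s : ℕ) (hs : 1 ≤ s) (hn : 2 * s ≤ n) :
    (((s : ℝ) / n) ^ 4) ^ s ≤ 1 / (n : ℝ) ^ 2 := by
  have hs0 : (0 : ℝ) < s := by exact_mod_cast hs
  have hn0 : (0 : ℝ) < n := by exact_mod_cast (by omega : 0 < n)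
  have hn' : 2 * (s : ℝ) ≤ n := by exact_mod_cast hn
  have hx : (0 : ℝ) < (s : ℝ) / n := by positivity
  have hx2 : (s : ℝ) / n ≤ 1 / 2 := by rw [div_le_div_iff₀ hn0 (by norm_num)]; linarith
  have a : ((s : ℝ) / n) ^ s ≤ (s : ℝ) / n := by
    simpa using pow_le_pow_of_le_one hx.le (by linarith) hs
  have b : ((s : ℝ) / n) ^ s ≤ 1 / s := by
    calc ((s : ℝ) / n) ^ s ≤ (1 / 2) ^ s := by gcongr
      _ = 1 / 2 ^ s := by simp
      _ ≤ 1 / s := by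
        gcongr
        exact_mod_cast (Nat.lt_two_pow_self (n := s)).le
  have c : ((s : ℝ) / n) ^ s * ((s : ℝ) / n) ^ s ≤ 1 / n := by
    calc _ ≤ (s : ℝ) / n * (1 / s) := by gcongr
      _ = 1 / n := by field_simp
  calc (((s : ℝ) / n) ^ 4) ^ s = (((s : ℝ) / n) ^ s * ((s : ℝ) / n) ^ s) ^ 2 := by
        rw [← pow_mul, ← pow_add, ← pow_mul]
        congr 1
        ring
    _ ≤ (1 / (n : ℝ)) ^ 2 := by gcongr
    _ = _ := by simp


/-- The counting inequality (Lemma "probaInequality"): for every constant `Φ ∈ (0, 1/10]`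
there exist a positive integer `c`, a constant `ε > 0` and a threshold `n₀` such that for all
`n ≥ n₀` and all `1 ≤ s ≤ n / 2`,
`C(n,s) * C(c*s, ⌈(1-Φ)*c*s⌉) * ((1+ε)*s/n)^((1-Φ)*c*s) ≤ 1/n²`,
where the last power is a real power with real exponent. -/
theorem proba_inequality :
    ∀ Φ : ℝ, 0 < Φ → Φ ≤ 1 / 10 →
      ∃ c : ℕ, 0 < c ∧ ∃ ε : ℝ, 0 < ε ∧ ∃ n₀ : ℕ,
        ∀ n : ℕ, n₀ ≤ n → ∀ s : ℕ, 1 ≤ s → 2 * s ≤ n →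
          (n.choose s : ℝ) * ((c * s).choose ⌈(1 - Φ) * (c * s : ℕ)⌉₊ : ℝ) *
              ((1 + ε) * (s : ℝ) / (n : ℝ)) ^ ((1 - Φ) * ((c * s : ℕ) : ℝ))
            ≤ 1 / (n : ℝ) ^ 2 := by
  intro Φ h0 h1
  refine ⟨30, by norm_num, 1 / 10, by norm_num, 0, ?_⟩
  intro n _ s hs hn
  have hs0 : (0 : ℝ) < s := by exact_mod_cast hs
  have hn0 : (0 : ℝ) < n := by exact_mod_cast (by omega : 0 < n)
  have hn' : 2 * (s : ℝ) ≤ n := by exact_mod_cast hn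
  have hp : ((27 * s : ℕ) : ℝ) ≤ (1 - Φ) * ((30 * s : ℕ) : ℝ) := by
    push_cast
    nlinarith
  have hp2 : (1 - Φ) * ((30 * s : ℕ) : ℝ) ≤ ((30 * s : ℕ) : ℝ) := by
    push_cast
    nlinarith
  have hk : 27 * s ≤ ⌈(1 - Φ) * ((30 * s : ℕ) : ℝ)⌉₊ := by
    have := hp.trans (Nat.le_ceil _)
    exact_mod_cast this
  have hk2 : ⌈(1 - Φ) * ((30 * s : ℕ) : ℝ)⌉₊ ≤ 30 * s := Nat.ceil_le.2 hp2
  have A := choose_first n s hs hn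
  have B := choose_second s _ hk hk2
  have hx : (0 : ℝ) < (s : ℝ) / n := by positivity
  have hx2 : (s : ℝ) / n ≤ 1 / 2 := by rw [div_le_div_iff₀ hn0 (by norm_num)]; linarith
  have C : ((1 + 1 / 10) * (s : ℝ) / (n : ℝ)) ^ ((1 - Φ) * ((30 * s : ℕ) : ℝ))
      ≤ ((11 / 10 * ((s : ℝ) / n)) ^ 27) ^ s := by
    have e : (1 + 1 / 10) * (s : ℝ) / (n : ℝ) = 11 / 10 * ((s : ℝ) / n) := by ring
    rw [e, ← pow_mul, ← Real.rpow_natCast]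
    exact Real.rpow_le_rpow_of_exponent_ge (by positivity) (by linarith) hp
  refine le_trans ?_ (final_bound n s hs hn)
  calc _ ≤ (4 / ((s : ℝ) / n)) ^ s * (8 ^ 3 * (9 / 8) ^ 30) ^ s *
        ((11 / 10 * ((s : ℝ) / n)) ^ 27) ^ s := by gcongr
    _ = ((4 / ((s : ℝ) / n)) * (8 ^ 3 * (9 / 8) ^ 30) * (11 / 10 * ((s : ℝ) / n)) ^ 27) ^ s := by
        rw [← mul_pow, ← mul_pow]
    _ ≤ _ := by
        refine pow_le_pow_left₀ (by positivity) ?_ s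
        generalize (s : ℝ) / n = x at hx hx2
        have e : (4 / x) * (8 ^ 3 * (9 / 8) ^ 30) * (11 / 10 * x) ^ 27
            = (4 * (8 ^ 3 * (9 / 8) ^ 30) * (11 / 10) ^ 27) * x ^ 22 * x ^ 4 := by
          field_simp
        rw [e]
        have h22 : x ^ 22 ≤ (1 / 2) ^ 22 := by gcongr
        have : (4 * (8 ^ 3 * (9 / 8) ^ 30) * (11 / 10) ^ 27) * x ^ 22 ≤ 1 := by
          calc _ ≤ (4 * (8 ^ 3 * (9 / 8) ^ 30) * (11 / 10) ^ 27) * (1 / 2 : ℝ) ^ 22 := by gcongr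
            _ ≤ 1 := by norm_num
        exact mul_le_of_le_one_left (by positivity) this
end

section
/- For every q ∈ (0,1), the binary entropy satisfies H(q) ≤ 2·√(q·(1−q)), where H(q) = −q·log₂(q) − (1−q)·log₂(1−q) and log₂ denotes the logarithm to base 2. In particular, for every Φ ∈ (0,1), H(1−Φ) ≤ 2·√(Φ·(1−Φ)). -/
open Real in
lemma ent_aux_d1 {x : ℝ} (h0 : 0 < x) (h1 : x < 1) :
    HasDerivAt (fun q => 2 * log 2 * √(q * (1 - q)) - binEntropy q)
      (log 2 * (1 - 2 * x) / √(x * (1 - x)) - (log (1 - x) - log x)) x := by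
  have hw : 0 < x * (1 - x) := mul_pos h0 (by linarith)
  have hd : HasDerivAt (fun q : ℝ => q * (1 - q)) (1 - 2 * x) x := by
    refine ((hasDerivAt_id' x).mul ((hasDerivAt_id' x).const_sub 1)).congr_deriv ?_
    ring
  refine (((hd.sqrt hw.ne').const_mul (2 * log 2)).sub
    (hasDerivAt_binEntropy h0.ne' h1.ne)).congr_deriv ?_
  have := (Real.sqrt_pos.2 hw).ne'
  field_simp

open Real in
lemma ent_aux_d2 {x : ℝ} (h0 : 0 < x) (h1 : x < 1) :
    HasDerivAt (fun x => log 2 * (1 - 2 * x) / √(x * (1 - x)) - (log (1 - x) - log x))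
      ((√(x * (1 - x)) - log 2 / 2) / √(x * (1 - x)) ^ 3) x := by
  have h1' : 0 < 1 - x := by linarith
  have hw : 0 < x * (1 - x) := mul_pos h0 h1'
  have hd : HasDerivAt (fun q : ℝ => q * (1 - q)) (1 - 2 * x) x := by
    refine ((hasDerivAt_id' x).mul ((hasDerivAt_id' x).const_sub 1)).congr_deriv ?_
    ring
  have hs := Real.sqrt_pos.2 hw
  have hn : HasDerivAt (fun q : ℝ => log 2 * (1 - 2 * q)) (log 2 * (-(2 * 1))) x :=
    (((hasDerivAt_id' x).const_mul 2).const_sub 1).const_mul _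
  have hl : HasDerivAt (fun q : ℝ => log (1 - q)) (-1 / (1 - x)) x :=
    ((hasDerivAt_id' x).const_sub 1).log h1'.ne'
  refine ((hn.div (hd.sqrt hw.ne') hs.ne').sub (hl.sub (hasDerivAt_log h0.ne'))).congr_deriv ?_
  have hsq : √(x * (1 - x)) ^ 2 = x * (1 - x) := Real.sq_sqrt hw.le
  have e : -1 / (1 - x) - x⁻¹ = - 1 / √(x * (1 - x)) ^ 2 := by
    rw [hsq]; field_simp; ring
  rw [e]
  generalize √(x * (1 - x)) = s at *
  have := hs.ne'
  field_simp
  rw [hsq]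
  ring

open Real in
lemma ent_aux {q : ℝ} (h0 : 0 < q) (h1 : q ≤ 1 / 2) :
    0 ≤ 2 * log 2 * √(q * (1 - q)) - binEntropy q := by
  set f : ℝ → ℝ := fun q => 2 * log 2 * √(q * (1 - q)) - binEntropy q with hf
  change 0 ≤ f q
  have hL0 : 0 < log 2 := Real.log_pos (by norm_num)
  have hL1 : log 2 < 1 := by linarith [Real.log_two_lt_d9]
  have hcont : Continuous f := by
    have := binEntropy_continuous
    fun_prop
  obtain ⟨a, ha0, ha1, ha⟩ : ∃ a : ℝ, 0 < a ∧ a < 1 / 2 ∧ a * (1 - a) = (log 2 / 2) ^ 2 := by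
    have hp : 0 < 1 - log 2 ^ 2 := by nlinarith
    refine ⟨(1 - √(1 - log 2 ^ 2)) / 2, ?_, ?_, ?_⟩
    · have : √(1 - log 2 ^ 2) < 1 := by
        rw [Real.sqrt_lt' one_pos]; nlinarith
      linarith
    · have := Real.sqrt_pos.2 hp
      linarith
    · have := Real.sq_sqrt hp.le
      nlinarith
  have key : ∀ x, a ≤ x → x ≤ 1 / 2 → 0 ≤ f x := by
    intro x hx hx2
    have hc : ConvexOn ℝ (Set.Icc a (1 - a)) f := by
      refine convexOn_of_hasDerivWithinAt2_nonneg (convex_Icc _ _) hcont.continuousOn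
        (f' := fun x => log 2 * (1 - 2 * x) / √(x * (1 - x)) - (log (1 - x) - log x))
        (f'' := fun x => (√(x * (1 - x)) - log 2 / 2) / √(x * (1 - x)) ^ 3) ?_ ?_ ?_
      all_goals
        intro y hy
        rw [interior_Icc] at hy
        obtain ⟨hy1, hy2⟩ := hy
      · exact (ent_aux_d1 (by linarith) (by linarith)).hasDerivWithinAt
      · exact (ent_aux_d2 (by linarith) (by linarith)).hasDerivWithinAt
      · have : log 2 / 2 ≤ √(y * (1 - y)) := by
          apply Real.le_sqrt_of_sq_le
          rw [← ha]; nlinarith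
        exact div_nonneg (by linarith) (by positivity)
    have := hc.2 (show x ∈ Set.Icc a (1 - a) from ⟨hx, by linarith⟩)
      (show 1 - x ∈ Set.Icc a (1 - a) from ⟨by linarith, by linarith⟩)
      (show (0 : ℝ) ≤ 1 / 2 by norm_num) (show (0 : ℝ) ≤ 1 / 2 by norm_num) (by norm_num)
    have e1 : f (1 - x) = f x := by
      simp only [hf, binEntropy_one_sub]
      rw [show (1 - x) * (1 - (1 - x)) = x * (1 - x) by ring]
    have e2 : f (2⁻¹) = 0 := by
      simp only [hf, binEntropy_two_inv]
      rw [show (2⁻¹ : ℝ) * (1 - 2⁻¹) = 2⁻¹ ^ 2 by norm_num, Real.sqrt_sq (by norm_num)]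
      ring
    rw [e1] at this
    simp only [smul_eq_mul] at this
    rw [show 1 / 2 * x + 1 / 2 * (1 - x) = 2⁻¹ by ring, e2] at this
    linarith
  rcases le_total a q with h | h
  · exact key q h h1
  have hc : ConcaveOn ℝ (Set.Icc 0 a) f := by
    refine concaveOn_of_hasDerivWithinAt2_nonpos (convex_Icc _ _) hcont.continuousOn
      (f' := fun x => log 2 * (1 - 2 * x) / √(x * (1 - x)) - (log (1 - x) - log x))
      (f'' := fun x => (√(x * (1 - x)) - log 2 / 2) / √(x * (1 - x)) ^ 3) ?_ ?_ ?_
    all_goals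
      intro y hy
      rw [interior_Icc] at hy
      obtain ⟨hy1, hy2⟩ := hy
    · exact (ent_aux_d1 (by linarith) (by linarith)).hasDerivWithinAt
    · exact (ent_aux_d2 (by linarith) (by linarith)).hasDerivWithinAt
    · have : √(y * (1 - y)) ≤ log 2 / 2 := by
        apply Real.sqrt_le_iff.2 ⟨by positivity, ?_⟩
        rw [← ha]; nlinarith
      exact div_nonpos_of_nonpos_of_nonneg (by linarith) (by positivity)
  have := hc.min_le_of_mem_Icc (x := 0) (y := a) (z := q) ⟨le_rfl, ha0.le⟩ ⟨ha0.le, le_rfl⟩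
    ⟨h0.le, h⟩
  have e0 : f 0 = 0 := by simp [hf]
  rw [e0] at this
  exact (le_min le_rfl (key a le_rfl ha1.le)).trans this

open Real in
lemma ent_main {q : ℝ} (h0 : 0 < q) (h1 : q < 1) :
    -q * Real.logb 2 q - (1 - q) * Real.logb 2 (1 - q) ≤ 2 * Real.sqrt (q * (1 - q)) := by
  have hL0 : 0 < log 2 := Real.log_pos (by norm_num)
  have hb : binEntropy q ≤ 2 * log 2 * √(q * (1 - q)) := by
    rcases le_total q (1 / 2) with h | h
    · linarith [ent_aux h0 h]
    · have := ent_aux (q := 1 - q) (by linarith) (by linarith)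
      rw [binEntropy_one_sub, show (1 - q) * (1 - (1 - q)) = q * (1 - q) by ring] at this
      linarith
  have e : -q * Real.logb 2 q - (1 - q) * Real.logb 2 (1 - q) = binEntropy q / log 2 := by
    simp only [Real.logb, binEntropy, Real.log_inv]
    field_simp
    ring
  rw [e, div_le_iff₀ hL0]
  linarith


/-- Upper bound on the binary entropy: for every `q ∈ (0,1)`,
`H(q) = -q·log₂ q - (1-q)·log₂(1-q) ≤ 2·√(q·(1-q))`; in particular, for every `Φ ∈ (0,1)`,
`H(1-Φ) ≤ 2·√(Φ·(1-Φ))`. -/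
theorem binary_entropy_le :
    (∀ q : ℝ, 0 < q → q < 1 →
        -q * Real.logb 2 q - (1 - q) * Real.logb 2 (1 - q) ≤ 2 * Real.sqrt (q * (1 - q))) ∧
    (∀ Φ : ℝ, 0 < Φ → Φ < 1 →
        -(1 - Φ) * Real.logb 2 (1 - Φ) - (1 - (1 - Φ)) * Real.logb 2 (1 - (1 - Φ))
          ≤ 2 * Real.sqrt (Φ * (1 - Φ))) := by

  refine ⟨fun q h0 h1 => ent_main h0 h1, fun p h0 h1 => ?_⟩
  have := ent_main (q := 1 - p) (by linarith) (by linarith)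
  rwa [show (1 - p) * (1 - (1 - p)) = p * (1 - p) by ring] at this
end

section
/- Let V be a finite set of c vertices and let f : V → Option V satisfy: for all u, f(u) ≠ some u (no self-loops), so that every vertex has out-degree at most 1 in the directed graph with edge set D = {(u,v) : f(u) = some v}. Let a = |{u ∈ V : f(u) is defined}| be the number of directed edges, and let H be the simple graph on V obtained as the symmetric closure of D (u and v adjacent iff f(u) = some v or f(v) = some u). Then the number of connected components of H is at most c − a/2; equivalently, 2·(number of connected components of H) + a ≤ 2·c. -/
/-- Combinatorial core of the cluster-merging lemma: let `V` be a finite set of `c`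
vertices and `f : V → Option V` a map with no self-loops (`f u ≠ some u`), viewed as a
directed graph of out-degree at most `1` with `a` edges (where `a` is the number of `u`
with `f u` defined). If `H` is the simple graph obtained as the symmetric closure of this
directed graph, then `H` has at most `c - a/2` connected components, i.e.
`2 * #components + a ≤ 2 * c`. -/
theorem symmetric_closure_components {V : Type*} [Fintype V] [DecidableEq V]
    (c : ℕ) (hcard : Fintype.card V = c)
    (f : V → Option V) (hself : ∀ u, f u ≠ some u)
    (a : ℕ) (ha : a = (Finset.univ.filter (fun u => (f u).isSome)).card)
    (H : SimpleGraph V)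
    (hH : ∀ u v : V, H.Adj u v ↔ (f u = some v ∨ f v = some u)) :
    2 * Nat.card H.ConnectedComponent + a ≤ 2 * c := by
  classical
  have hf : ∀ K : H.ConnectedComponent, ∃ r, H.connectedComponentMk r = K :=
    fun K => K.exists_rep
  choose r hr using hf
  have key : ∀ K : H.ConnectedComponent, ∃ y : V ⊕ {u : V // ¬ (f u).isSome},
      y ≠ Sum.inl (r K) ∧ H.connectedComponentMk (Sum.elim id Subtype.val y) = K := by
    intro K
    cases h : f (r K) with
    | none => exact ⟨Sum.inr ⟨r K, by simp [h]⟩, by simp, by simpa using hr K⟩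
    | some v =>
      refine ⟨Sum.inl v, ?_, ?_⟩
      · intro e
        have e' : v = r K := Sum.inl.inj e
        rw [e'] at h
        exact hself _ h
      · have hadj : H.Adj v (r K) := (hH _ _).2 (Or.inr h)
        have h2 : H.connectedComponentMk v = H.connectedComponentMk (r K) :=
          SimpleGraph.ConnectedComponent.sound hadj.reachable
        exact h2.trans (hr K)
  choose y hy1 hy2 using key
  let g : H.ConnectedComponent ⊕ H.ConnectedComponent → V ⊕ {u : V // ¬ (f u).isSome} :=
    Sum.elim (fun K => Sum.inl (r K)) y
  have hg : ∀ x, H.connectedComponentMk (Sum.elim id Subtype.val (g x)) = Sum.elim id id x := by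
    rintro (K | K)
    · exact hr K
    · exact hy2 K
  have hinj : Function.Injective g := by
    intro x x' e
    have h1 : Sum.elim id id x = Sum.elim id id x' := by rw [← hg x, ← hg x', e]
    rcases x with K | K <;> rcases x' with L | L <;> simp only [Sum.elim_inl, Sum.elim_inr, id] at h1 <;>
      subst h1
    · rfl
    · exact absurd e.symm (hy1 K)
    · exact absurd e (hy1 K)
    · rfl
  have hle := Nat.card_le_card_of_injective g hinj
  rw [Nat.card_sum, Nat.card_sum, Nat.card_eq_fintype_card (α := V),
    Nat.card_eq_fintype_card (α := {u : V // ¬ (f u).isSome}), Fintype.card_subtype, hcard] at hle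
  have hsum := Finset.card_filter_add_card_filter_not (s := (Finset.univ : Finset V))
    (fun u => (f u).isSome = true)
  rw [Finset.card_univ, hcard] at hsum
  omega
end
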